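/- Let f be a homeomorphism of the open annulus 𝔸 isotopic to the identity and satisfying the intersection property, and let F be a lift of f to ℝ². If Rec⁺(f) ≠ ∅, then Rot(F) ≠ ∅. -/

import Mathlib

open Filter Topology Set

noncomputable section

/-- The plane ℝ². -/
abbrev Plane := ℝ × ℝ

/-- The open annulus 𝔸 = ℝ/ℤ × ℝ. -/
abbrev Ann := AddCircle (1 : ℝ) × ℝ

/-- The covering map π : ℝ² → 𝔸, (x,y) ↦ (x + ℤ, y). -/
def prj : Plane → Ann := fun p => ((p.1 : AddCircle (1 : ℝ)), p.2)

/-- The deck transformation T^k : ℝ² → ℝ², (x,y) ↦ (x + k, y). -/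
def Tr (k : ℤ) : Plane → Plane := fun p => (p.1 + (k : ℝ), p.2)

/-- `F` is a lift of `f` to the universal cover ℝ² of the annulus. -/
def IsLift (f : Ann ≃ₜ Ann) (F : Plane ≃ₜ Plane) : Prop :=
  ∀ p : Plane, prj (F p) = f (prj p)

/-- `f` is isotopic to the identity: there is a continuous family of homeomorphisms
joining the identity to `f`. -/
def IsotopicToId (f : Ann ≃ₜ Ann) : Prop :=
  ∃ H : ℝ → Ann → Ann,
    Continuous (fun q : ℝ × Ann => H q.1 q.2) ∧
    (∀ t : ℝ, ∃ h : Ann ≃ₜ Ann, ∀ z, H t z = h z) ∧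
    (∀ z, H 0 z = z) ∧ (∀ z, H 1 z = f z)

/-- An essential circle in 𝔸: a simple closed curve which is not null-homotopic. -/
def IsEssentialCircle (c : Set Ann) : Prop :=
  ∃ φ : C(AddCircle (1 : ℝ), Ann), Function.Injective φ ∧ Set.range φ = c ∧
    ¬ ∃ pt : Ann, φ.Homotopic (ContinuousMap.const _ pt)

/-- `f` has the intersection property: every essential circle meets its image. -/
def IntersectionProperty (f : Ann → Ann) : Prop :=
  ∀ c : Set Ann, IsEssentialCircle c → (c ∩ f '' c).Nonempty

/-- `z` is a positively recurrent point of `g`: some subsequence of the forward orbit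
of `z` converges to `z`. -/
def PosRec {X : Type*} [TopologicalSpace X] (g : X → X) (z : X) : Prop :=
  ∃ φ : ℕ → ℕ, StrictMono φ ∧ Tendsto (fun k => g^[φ k] z) atTop (𝓝 z)

/-- The positively recurrent point `z` has rotation number `ρ` for the lift `F` of `f`. -/
def HasRotNum (f : Ann → Ann) (F : Plane → Plane) (z : Ann) (ρ : ℝ) : Prop :=
  PosRec f z ∧
    ∀ zt : Plane, prj zt = z →
      ∀ φ : ℕ → ℕ, StrictMono φ →
        Tendsto (fun k => f^[φ k] z) atTop (𝓝 z) →
        Tendsto (fun k => ((F^[φ k] zt).1 - zt.1) / (φ k : ℝ)) atTop (𝓝 ρ)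

/-- The rotation set Rot(F): the set of rotation numbers of positively recurrent
points of `f`. -/
def Rot (f : Ann → Ann) (F : Plane → Plane) : Set ℝ := {ρ | ∃ z, HasRotNum f F z ρ}

/-- The region `L(Γ)` of the plane on the left (west) of a line `Γ` (as a subset of ℝ²):
points lying in the connected component of the complement of `Γ` containing all far-west
points of the horizontal axis. -/
def Lset (Γ : Set Plane) : Set Plane :=
  {p | ∃ s : ℝ, ∀ x ≤ s, p ∈ connectedComponentIn Γᶜ ((x, 0) : Plane)}

/-- The region `R(Γ)` of the plane on the right (east) of a line `Γ`. -/
def Rset (Γ : Set Plane) : Set Plane :=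
  {p | ∃ s : ℝ, ∀ x ≥ s, p ∈ connectedComponentIn Γᶜ ((x, 0) : Plane)}

/-- The relation `Γ₁ < Γ₂` on (essential, oriented from south to north) lines:
`Cl(L(Γ₁)) ⊆ L(Γ₂)`. -/
def lineLT (Γ₁ Γ₂ : Set Plane) : Prop := closure (Lset Γ₁) ⊆ Lset Γ₂

/-- An essential line in ℝ², oriented from south to north: a properly embedded copy of ℝ
whose second coordinate tends to ±∞ at ±∞. -/
def IsEssLinePlane (Γ : ℝ → Plane) : Prop :=
  Continuous Γ ∧ Function.Injective Γ ∧ IsProperMap Γ ∧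
    Tendsto (fun t => (Γ t).2) atTop atTop ∧ Tendsto (fun t => (Γ t).2) atBot atBot

/-- An essential line in the annulus 𝔸: a properly embedded simple path joining one end
to the other. -/
def IsEssLineAnn (γ : ℝ → Ann) : Prop :=
  Continuous γ ∧ Function.Injective γ ∧ IsProperMap γ ∧
    ((Tendsto (fun t => (γ t).2) atTop atTop ∧ Tendsto (fun t => (γ t).2) atBot atBot) ∨
     (Tendsto (fun t => (γ t).2) atTop atBot ∧ Tendsto (fun t => (γ t).2) atBot atTop))

/-- An oriented essential line in 𝔸 joining the lower end S to the upper end N. -/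
def IsEssLineAnnSN (γ : ℝ → Ann) : Prop :=
  Continuous γ ∧ Function.Injective γ ∧ IsProperMap γ ∧
    Tendsto (fun t => (γ t).2) atTop atTop ∧ Tendsto (fun t => (γ t).2) atBot atBot

/-- A homeomorphism of the plane which turns difference vectors by a continuous symmetric
logarithmic factor (a workable form of being isotopic to the identity). -/
def Nice (h : ℂ ≃ₜ ℂ) : Prop :=
  ∃ L : ℂ × ℂ → ℂ, ContinuousOn L {p | p.1 ≠ p.2} ∧
    (∀ p q, p ≠ q → L (p, q) = L (q, p)) ∧
    ∀ p q, p ≠ q → h p - h q = (p - q) * Complex.exp (L (p, q))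

lemma nice_refl : Nice (Homeomorph.refl ℂ) :=
  ⟨fun _ => 0, continuousOn_const, fun _ _ _ => rfl, fun p q _ => by simp⟩

lemma Nice.trans {g h : ℂ ≃ₜ ℂ} (hg : Nice g) (hh : Nice h) : Nice (g.trans h) := by
  obtain ⟨L, Lc, Ls, Le⟩ := hg
  obtain ⟨M, Mc, Ms, Me⟩ := hh
  refine ⟨fun p => L p + M (g p.1, g p.2), ?_, ?_, ?_⟩
  · refine Lc.add (Mc.comp (by fun_prop) ?_)
    intro p hp
    exact fun h => hp (g.injective h)
  · intro p q hpq
    simp only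
    rw [Ls p q hpq, Ms _ _ (g.injective.ne hpq)]
  · intro p q hpq
    simp only [Homeomorph.trans_apply]
    rw [Me _ _ (g.injective.ne hpq), Le p q hpq, Complex.exp_add, mul_assoc]

lemma Nice.symm {g : ℂ ≃ₜ ℂ} (hg : Nice g) : Nice g.symm := by
  obtain ⟨L, Lc, Ls, Le⟩ := hg
  refine ⟨fun p => - L (g.symm p.1, g.symm p.2), ?_, ?_, ?_⟩
  · refine (Lc.comp (by fun_prop) ?_).neg
    intro p hp
    exact fun h => hp (g.symm.injective h)
  · intro p q hpq
    simp only
    rw [Ls _ _ (g.symm.injective.ne hpq)]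
  · intro p q hpq
    have := Le _ _ (g.symm.injective.ne hpq)
    simp only [Homeomorph.apply_symm_apply] at this
    rw [this, mul_assoc, ← Complex.exp_add]
    simp

/-- a Lipschitz-small perturbation of the identity -/
lemma exists_push (c v : ℂ) (r : ℝ) (hr : 0 < r) (hv : ‖v‖ < 1) :
    ∃ φ : ℂ ≃ₜ ℂ, Nice φ ∧ φ c = c + r * v ∧ ∀ p, r ≤ dist p c → φ p = p := by
  set g : ℂ → ℂ := fun p => p + ((max 0 (r - dist p c) : ℝ) : ℂ) * v with hg
  have key : ∀ p q, ‖g p - g q - (p - q)‖ ≤ ‖v‖ * ‖p - q‖ := by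
    intro p q
    have : g p - g q - (p - q) = (((max 0 (r - dist p c)) - (max 0 (r - dist q c)) : ℝ) : ℂ) * v := by
      simp only [hg]; push_cast; ring
    rw [this, norm_mul, mul_comm]
    gcongr
    rw [Complex.norm_real, Real.norm_eq_abs]
    refine (abs_max_sub_max_le_max _ _ _ _).trans ?_
    rw [sub_self, abs_zero, max_eq_right (abs_nonneg _)]
    have := abs_dist_sub_le p q c
    rw [dist_eq_norm p q] at this
    rw [show r - dist p c - (r - dist q c) = -(dist p c - dist q c) by ring, abs_neg]
    exact this
  have happ : ApproximatesLinearOn g ((ContinuousLinearEquiv.refl ℂ ℂ : ℂ ≃L[ℂ] ℂ) : ℂ →L[ℂ] ℂ)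
      univ ‖v‖₊ := by
    intro p _ q _
    simpa using key p q
  have hc : Subsingleton ℂ ∨ ‖v‖₊ <
      ‖((ContinuousLinearEquiv.refl ℂ ℂ).symm : ℂ →L[ℂ] ℂ)‖₊⁻¹ := by
    right
    have : ‖((ContinuousLinearEquiv.refl ℂ ℂ).symm : ℂ →L[ℂ] ℂ)‖₊ = 1 := by
      have : ((ContinuousLinearEquiv.refl ℂ ℂ).symm : ℂ →L[ℂ] ℂ) = ContinuousLinearMap.id ℂ ℂ := by
        ext; simp
      rw [this]; ext; simp
    rw [this, inv_one]
    exact hv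
  let φ := happ.toHomeomorph g hc
  have hφ : ∀ p, φ p = g p := fun p => rfl
  refine ⟨φ, ?_, ?_, ?_⟩
  · have hq : ∀ p q, p ≠ q → ‖(g p - g q) / (p - q) - 1‖ < 1 := by
      intro p q hpq
      have h0 : p - q ≠ 0 := sub_ne_zero.mpr hpq
      rw [div_sub_one h0, norm_div, div_lt_one (norm_pos_iff.mpr h0)]
      calc _ ≤ _ := key p q
        _ < _ := mul_lt_of_lt_one_left (norm_pos_iff.mpr h0) hv
    have hs : ∀ p q, p ≠ q → (g p - g q) / (p - q) ∈ Complex.slitPlane := by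
      intro p q hpq
      apply Complex.mem_slitPlane_of_norm_lt_one (z := (g p - g q) / (p - q) - 1) (hq p q hpq) |> fun h => by simpa using h
    refine ⟨fun p => Complex.log ((g p.1 - g p.2) / (p.1 - p.2)), ?_, ?_, ?_⟩
    · have gc : Continuous g := by simp only [hg]; fun_prop
      refine ContinuousOn.clog ?_ (fun p hp => hs _ _ hp)
      refine ContinuousOn.div (by fun_prop) (by fun_prop) fun p hp => sub_ne_zero.mpr hp
    · intro p q _
      simp only
      rw [← neg_sub (g q), ← neg_sub q, neg_div_neg_eq]
    · intro p q hpq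
      have h0 : p - q ≠ 0 := sub_ne_zero.mpr hpq
      rw [hφ, hφ, Complex.exp_log (Complex.slitPlane_ne_zero (hs p q hpq))]
      field_simp
  · rw [hφ]; simp [hg, hr.le]
  · intro p hp
    rw [hφ]; simp only [hg]
    rw [max_eq_left (by linarith)]; simp

/-- `a` can be moved to `b` by a nice homeomorphism supported in `U`. -/
def Mv (U : Set ℂ) (a b : ℂ) : Prop :=
  ∃ φ : ℂ ≃ₜ ℂ, Nice φ ∧ φ a = b ∧ ∀ p, p ∉ U → φ p = p

lemma mv_of_preconnected {U A : Set ℂ} (hU : IsOpen U) (hA : IsPreconnected A) (hAU : A ⊆ U)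
    {a b : ℂ} (ha : a ∈ A) (hb : b ∈ A) : Mv U a b := by
  refine hA.induction₂ (Mv U) ?_ ?_ ?_ ha hb
  · intro x hx
    apply nhdsWithin_le_nhds
    obtain ⟨r, hr, hball⟩ := Metric.isOpen_iff.mp hU x (hAU hx)
    filter_upwards [Metric.ball_mem_nhds x hr] with y hy
    obtain ⟨φ, hn, hx, hf⟩ := exists_push x ((y - x) / r) r hr (by
      rw [norm_div, Complex.norm_real, Real.norm_of_nonneg hr.le, div_lt_one hr, ← dist_eq_norm]
      exact hy)
    refine ⟨φ, hn, ?_, fun p hp => hf p ?_⟩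
    · rw [hx]
      have : (r : ℂ) ≠ 0 := by exact_mod_cast hr.ne'
      field_simp; ring
    · by_contra h
      exact hp (hball (by simpa using h))
  · rintro x y z - - - ⟨φ, hn, hx, hf⟩ ⟨ψ, hn', hx', hf'⟩
    refine ⟨φ.trans ψ, hn.trans hn', by simp [hx, hx'], fun p hp => by simp [hf p hp, hf' p hp]⟩
  · rintro x y - - ⟨φ, hn, hx, hf⟩
    refine ⟨φ.symm, hn.symm, by rw [← hx]; simp, fun p hp => ?_⟩
    rw [Homeomorph.symm_apply_eq, hf p hp]

/-- lifting a homotopy starting at `1` through the exponential -/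
lemma exp_lift {A : Type*} [TopologicalSpace A] (R : unitInterval × A → ℂ) (hR : Continuous R)
    (h0 : ∀ p, R p ≠ 0) (h1 : ∀ a, R (0, a) = 1) :
    ∃ L : unitInterval × A → ℂ, Continuous L ∧ (∀ p, Complex.exp (L p) = R p) ∧
      (∀ a, L (0, a) = 0) ∧ ∀ a b, (∀ t, R (t, a) = R (t, b)) → ∀ t, L (t, a) = L (t, b) := by
  let H : C(unitInterval × A, {z : ℂ // z ≠ 0}) := ⟨fun p => ⟨R p, h0 p⟩, by fun_prop⟩
  have H0 : ∀ a, H (0, a) = (fun z : ℂ ↦ (⟨_, z.exp_ne_zero⟩ : {z : ℂ // z ≠ 0}))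
      ((ContinuousMap.const A (0 : ℂ)) a) := by
    intro a; apply Subtype.ext; simp [H, h1]
  let L := Complex.isCoveringMap_exp.liftHomotopy H (ContinuousMap.const A 0) H0
  have hL := Complex.isCoveringMap_exp.liftHomotopy_lifts H (ContinuousMap.const A 0) H0
  have hL0 := Complex.isCoveringMap_exp.liftHomotopy_zero H (ContinuousMap.const A 0) H0
  refine ⟨L, L.continuous, fun p => congrArg Subtype.val (congrFun hL p), hL0, ?_⟩
  intro a b hab t
  have := Complex.isCoveringMap_exp.eq_of_comp_eq (A := unitInterval)
    (g₁ := fun t => L (t, a)) (g₂ := fun t => L (t, b)) (by fun_prop) (by fun_prop)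
    (by
      funext t
      have e1 := congrFun hL (t, a)
      have e2 := congrFun hL (t, b)
      have : H (t, a) = H (t, b) := Subtype.ext (hab t)
      exact e1.trans (this.trans e2.symm)) 0 ((hL0 a).trans (hL0 b).symm)
  exact congrFun this t

lemma exists_angle (h : ℂ → ℂ) (hc : Continuous h) (hf : ∀ p, h p ≠ p) :
    ∃ Θ : ℂ → ℂ, Continuous Θ ∧ ∀ p, h p - p = Complex.exp (Θ p) := by
  have hne : ∀ p, h p - p ≠ 0 := fun p => sub_ne_zero.mpr (hf p)
  obtain ⟨L, Lc, Le, -, -⟩ := exp_lift (A := ℂ)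
    (fun q => (h ((q.1 : ℝ) * q.2) - (q.1 : ℝ) * q.2) / (h 0 - 0))
    (Continuous.div_const (by fun_prop) _) (fun q => div_ne_zero (hne _) (hne _))
    (fun a => by simpa using hne 0)
  refine ⟨fun p => L (1, p) + Complex.log (h 0 - 0), by fun_prop, fun p => ?_⟩
  rw [Complex.exp_add, Le, Complex.exp_log (hne 0)]
  have := hne 0
  field_simp
  simp

def NoPer (n : ℕ) : Prop :=
  ∀ h : ℂ ≃ₜ ℂ, Nice h → (∀ p, h p ≠ p) → ∀ x, h^[n] x ≠ x

lemma noPer_one : NoPer 1 := fun _ _ hf x => hf x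

lemma noPer_two : NoPer 2 := by
  rintro h ⟨L, Lc, Ls, Le⟩ hf x hx
  change h (h x) = x at hx
  obtain ⟨Θ, Θc, Θe⟩ := exists_angle h h.continuous hf
  let c : ℂ → ℂ := fun p => Θ (h p) - Θ p - L (h p, p)
  have cc : Continuous c := by
    have : Continuous fun p => L (h p, p) := Lc.comp_continuous (by fun_prop) (fun p => hf p)
    exact ((Θc.comp h.continuous).sub Θc).sub this
  have ce : ∀ p, Complex.exp (c p) = 1 := by
    intro p
    have h1 := Le _ _ (hf p)
    rw [Θe, Θe] at h1
    simp only [c]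
    rw [Complex.exp_sub, Complex.exp_sub, h1]
    field_simp
  have cst : c x = c (h x) := by
    have hcov := Complex.isCoveringMap_exp
    have := hcov.eq_of_comp_eq (A := ℂ) (g₁ := c) (g₂ := fun _ => c x) cc continuous_const
      (by funext p; apply Subtype.ext; simp [ce]) x rfl
    exact (congrFun this (h x)).symm
  simp only [c, hx] at cst
  rw [Ls _ _ (hf x)] at cst
  have e : Θ (h x) = Θ x := by linear_combination (1 / 2) * cst
  have e1 := Θe x
  have e2 := Θe (h x)
  rw [hx, e, ← e1] at e2
  exact hf x (by linear_combination (-1 / 2) * e2)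

lemma supp_preserve {φ : ℂ ≃ₜ ℂ} {U : Set ℂ} (hφ : ∀ p, p ∉ U → φ p = p) {q : ℂ} (hq : q ∈ U) :
    φ q ∈ U := by
  by_contra h
  have := hφ _ h
  rw [φ.injective this] at h
  exact h hq

lemma exists_nhds_free {h : ℂ → ℂ} (hc : Continuous h) {K C : Set ℂ} (hK : IsCompact K)
    (hC : IsCompact C) (hd : ∀ p ∈ K, h p ∉ C) :
    ∃ U V, IsOpen U ∧ IsOpen V ∧ K ⊆ U ∧ C ⊆ V ∧ ∀ p ∈ U, h p ∉ V := by
  have : Disjoint (h '' K) C := by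
    rw [Set.disjoint_left]; rintro _ ⟨p, hp, rfl⟩; exact hd p hp
  obtain ⟨V₁, V₂, o1, o2, s1, s2, dis⟩ := SeparatedNhds.of_isCompact_isCompact (hK.image hc) hC this
  refine ⟨h ⁻¹' V₁, V₂, o1.preimage hc, o2, image_subset_iff.mp s1, s2, fun p hp hp' => ?_⟩
  exact Set.disjoint_left.mp dis hp hp'

lemma free_return {n : ℕ} (IH : ∀ j, 1 ≤ j → j ≤ n → NoPer j) (hn : 1 ≤ n) {h : ℂ ≃ₜ ℂ}
    (hN : Nice h) (hf : ∀ p, h p ≠ p) {A : Set ℂ} (hA : IsCompact A) (hA' : IsPreconnected A)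
    (hfree : ∀ p ∈ A, h p ∉ A) {x : ℂ} (hx : x ∈ A) (hxn : h^[n] x ∈ A) : False := by
  classical
  have hex : ∃ i, 1 ≤ i ∧ h^[i] x ∈ A := ⟨n, hn, hxn⟩
  obtain ⟨i, hi1, hiA, hin, hmin⟩ : ∃ i, 1 ≤ i ∧ h^[i] x ∈ A ∧ i ≤ n ∧
      ∀ j, 1 ≤ j → j < i → h^[j] x ∉ A :=
    ⟨Nat.find hex, (Nat.find_spec hex).1, (Nat.find_spec hex).2, Nat.find_min' hex ⟨hn, hxn⟩,
      fun j hj hji hjA => Nat.find_min hex hji ⟨hj, hjA⟩⟩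
  obtain ⟨U₀, V₀, oU, oV, sU, sV, hUV⟩ := exists_nhds_free h.continuous hA hA hfree
  let S : Set ℂ := (fun j => h^[j] x) '' (Set.Ico 1 i)
  have hS : S.Finite := (Set.finite_Ico 1 i).image _
  let U := U₀ ∩ V₀ ∩ Sᶜ
  have hU : IsOpen U := (oU.inter oV).inter hS.isClosed.isOpen_compl
  have hAU : A ⊆ U := by
    intro p hp
    refine ⟨⟨sU hp, sV hp⟩, ?_⟩
    rintro ⟨j, ⟨hj1, hj2⟩, rfl⟩
    exact hmin j hj1 hj2 hp
  have hUf : ∀ p ∈ U, h p ∉ U := fun p hp hp' => hUV p hp.1.1 hp'.1.2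
  obtain ⟨φ, φn, φx, φs⟩ := mv_of_preconnected hU hA' hAU hiA hx
  refine IH i hi1 hin (h.trans φ) (hN.trans φn) ?_ x ?_
  · intro p hp
    simp only [Homeomorph.trans_apply] at hp
    by_cases hq : h p ∈ U
    · have := supp_preserve φs hq
      rw [hp] at this
      exact hUf p this hq
    · rw [φs _ hq] at hp
      exact hf p hp
  · have hit : ∀ j, j < i → (h.trans φ)^[j] x = h^[j] x := by
      intro j
      induction j with
      | zero => intro _; rfl
      | succ j ih =>
        intro hj
        rw [Function.iterate_succ_apply', ih (by omega), Homeomorph.trans_apply,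
          Function.iterate_succ_apply']
        apply φs
        rintro ⟨-, h'⟩
        exact h' ⟨j + 1, ⟨by omega, hj⟩, Function.iterate_succ_apply' _ _ _⟩
    obtain ⟨k, rfl⟩ : ∃ k, i = k + 1 := ⟨i - 1, by omega⟩
    rw [Function.iterate_succ_apply', hit k (by omega), Homeomorph.trans_apply,
      ← Function.iterate_succ_apply' (f := h), φx]

lemma seg_mem {x u p : ℂ} {r : ℝ} (hu : dist u x = r) (hp : p ∈ segment ℝ x u) :
    dist p x ≤ r ∧ (dist p x = r → p = u) := by
  obtain ⟨t, ⟨ht0, ht1⟩, rfl⟩ := (segment_eq_image' ℝ x u ▸ hp :)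
  have hd : dist (x + t • (u - x)) x = t * r := by
    rw [dist_eq_norm, add_sub_cancel_left, norm_smul, Real.norm_of_nonneg ht0, ← dist_eq_norm, hu]
  have hr : 0 ≤ r := hu ▸ dist_nonneg
  simp only
  rw [hd]
  refine ⟨mul_le_of_le_one_left hr ht1, fun h => ?_⟩
  rcases hr.eq_or_lt with h0 | h0
  · have : u = x := by rw [← dist_eq_zero, hu, ← h0]
    simp [this]
  · have : t = 1 := by
      have : t * r = 1 * r := by linarith
      exact mul_right_cancel₀ h0.ne' this
    simp [this]

lemma isCompact_seg (x u : ℂ) : IsCompact (segment ℝ x u) := by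
  rw [segment_eq_image']
  exact isCompact_Icc.image (by fun_prop)

lemma isPreconnected_seg (x u : ℂ) : IsPreconnected (segment ℝ x u) :=
  (convex_segment x u).isPreconnected

theorem noPer_all (n : ℕ) (hn : 1 ≤ n) : NoPer n := by
  induction n using Nat.strong_induction_on with
  | _ n IH =>
  rcases (show n = 1 ∨ n = 2 ∨ 3 ≤ n by omega) with rfl | rfl | h3
  · exact noPer_one
  · exact noPer_two
  intro h hN hf x hx
  -- the critical disk centred at `x`
  obtain ⟨u, hu⟩ : ∃ u, ∀ p, max (dist u x) (dist (h u) x) ≤ max (dist p x) (dist (h p) x) := by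
    apply Continuous.exists_forall_le (f := fun p => max (dist p x) (dist (h p) x)) (by fun_prop)
    exact tendsto_atTop_mono (fun p => le_max_left _ _) (tendsto_dist_right_cocompact_atTop x)
  set r := max (dist u x) (dist (h u) x) with hr
  have hO : ∀ p, dist p x < r → r < dist (h p) x := by
    intro p hp
    by_contra! hle
    have hcl : h p ∈ closure (Metric.ball x r) := by
      rw [closure_ball x (by
        intro h0
        have := dist_nonneg (x := p) (y := x)
        linarith)]
      exact hle
    have hopen : IsOpen (h '' Metric.ball x r) := h.isOpenMap _ Metric.isOpen_ball
    obtain ⟨y, ⟨q, hq, rfl⟩, hy⟩ := mem_closure_iff.mp hcl _ hopen ⟨p, hp, rfl⟩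
    have := hu q
    rw [Metric.mem_ball] at hq hy
    have := max_lt hq hy
    linarith
  have hO' : ∀ p, dist (h p) x < r → r < dist p x := by
    intro p hp
    by_contra! hle
    rcases hle.lt_or_eq with h1 | h1
    · have := hO p h1; linarith
    have hcl : p ∈ closure (Metric.ball x r) := by
      rw [closure_ball x (by
        intro h0
        have := dist_nonneg (x := h p) (y := x)
        linarith)]
      exact hle
    have hopen : IsOpen (h ⁻¹' Metric.ball x r) := Metric.isOpen_ball.preimage h.continuous
    obtain ⟨q, hq, hq'⟩ := mem_closure_iff.mp hcl _ hopen hp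
    have h1 := hO q hq'
    have h2 : dist (h q) x < r := hq
    linarith
  have hstar : ∀ p, dist p x ≤ r → dist (h p) x ≤ r → dist p x = r ∧ dist (h p) x = r := by
    intro p h1 h2
    constructor
    · by_contra h'
      have := hO p (lt_of_le_of_ne h1 h'); linarith
    · by_contra h'
      have := hO' p (lt_of_le_of_ne h2 h'); linarith
  obtain ⟨hur, hwr⟩ := hstar u (le_max_left _ _) (le_max_right _ _)
  set w := h u with hw
  set Su := segment ℝ x u with hSu
  set Sw := segment ℝ x w with hSw
  have xu : x ∈ Su := left_mem_segment ℝ x u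
  have xw : x ∈ Sw := left_mem_segment ℝ x w
  have uu : u ∈ Su := right_mem_segment ℝ x u
  have ww : w ∈ Sw := right_mem_segment ℝ x w
  have huw : h w ≠ u := fun h' => noPer_two h hN hf u h'
  have fu : ∀ p ∈ Su, h p ∉ Su := by
    intro p hp hp'
    obtain ⟨a1, a2⟩ := seg_mem hur hp
    obtain ⟨b1, b2⟩ := seg_mem hur hp'
    obtain ⟨c1, c2⟩ := hstar p a1 b1
    exact hf p ((b2 c2).trans (a2 c1).symm)
  have fw : ∀ p ∈ Sw, h p ∉ Sw := by
    intro p hp hp'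
    obtain ⟨a1, a2⟩ := seg_mem hwr hp
    obtain ⟨b1, b2⟩ := seg_mem hwr hp'
    obtain ⟨c1, c2⟩ := hstar p a1 b1
    exact hf p ((b2 c2).trans (a2 c1).symm)
  have IHle : ∀ m, m < n → ∀ j, 1 ≤ j → j ≤ m → NoPer j := fun m hm j hj hjm =>
    IH j (by omega) hj
  have Ou : ∀ i, 1 ≤ i → i < n → h^[i] x ∉ Su := fun i hi hin hmem =>
    free_return (IHle i hin) hi hN hf (isCompact_seg x u) (isPreconnected_seg x u) fu xu hmem
  have Ow : ∀ i, 1 ≤ i → i < n → h^[i] x ∉ Sw := fun i hi hin hmem =>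
    free_return (IHle i hin) hi hN hf (isCompact_seg x w) (isPreconnected_seg x w) fw xw hmem
  -- no second return
  have f2 : ∀ v ∈ Su, h (h v) ∉ Sw := by
    intro v hv hv'
    set v' := h (h v) with hvv
    have s1 : segment ℝ x v ⊆ Su := (convex_segment x u).segment_subset xu hv
    have s2 : segment ℝ x v' ⊆ Sw := (convex_segment x w).segment_subset xw hv'
    let A := segment ℝ x v ∪ segment ℝ x v'
    have bA : ∀ p ∈ A, dist p x ≤ r ∧ (dist p x = r → p = u ∧ v = u ∨ p = w ∧ v' = w) := by
      rintro p (hp | hp)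
      · refine ⟨(seg_mem hur (s1 hp)).1, fun hpr => Or.inl ?_⟩
        have hpu := (seg_mem hur (s1 hp)).2 hpr
        refine ⟨hpu, ?_⟩
        obtain ⟨k1, k2⟩ := seg_mem hur hv
        have k3 := (seg_mem (rfl : dist v x = dist v x) hp).1
        exact k2 (by linarith)
      · refine ⟨(seg_mem hwr (s2 hp)).1, fun hpr => Or.inr ?_⟩
        have hpu := (seg_mem hwr (s2 hp)).2 hpr
        refine ⟨hpu, ?_⟩
        obtain ⟨k1, k2⟩ := seg_mem hwr hv'
        have k3 := (seg_mem (rfl : dist v' x = dist v' x) hp).1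
        exact k2 (by linarith)
    have fA : ∀ p ∈ A, h p ∉ A := by
      intro p hp hp'
      obtain ⟨a1, a2⟩ := bA p hp
      obtain ⟨b1, b2⟩ := bA _ hp'
      obtain ⟨c1, c2⟩ := hstar p a1 b1
      rcases a2 c1 with ⟨e1, e2⟩ | ⟨e1, e2⟩ <;> rcases b2 c2 with ⟨e3, e4⟩ | ⟨e3, e4⟩
      · exact hf p (e3.trans e1.symm)
      · rw [hvv, e2] at e4
        exact hf u (h.injective e4)
      · rw [e1] at e3; exact huw e3
      · exact hf p (e3.trans e1.symm)
    refine free_return (n := 2) (IHle 2 (by omega)) (by norm_num) hN hf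
      ((isCompact_seg x v).union (isCompact_seg x v'))
      (IsPreconnected.union x (left_mem_segment ℝ x v) (left_mem_segment ℝ x v')
        (isPreconnected_seg x v) (isPreconnected_seg x v')) fA
      (x := v) (Or.inl (right_mem_segment ℝ x v)) (Or.inr (right_mem_segment ℝ x v'))
  obtain ⟨U₁, V₁, oU₁, oV₁, sU₁, sV₁, d₁⟩ :=
    exists_nhds_free h.continuous (isCompact_seg x w) (isCompact_seg x w) fw
  obtain ⟨U₂, V₂, oU₂, oV₂, sU₂, sV₂, d₂⟩ :=
    exists_nhds_free h.continuous (isCompact_seg x u) (isCompact_seg x u) fu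
  obtain ⟨U₃, V₃, oU₃, oV₃, sU₃, sV₃, d₃⟩ :=
    exists_nhds_free (h.continuous.comp h.continuous) (isCompact_seg x u) (isCompact_seg x w) f2
  let S : Set ℂ := (fun j => h^[j] x) '' (Set.Ico 1 n)
  have hS : S.Finite := (Set.finite_Ico 1 n).image _
  let P := U₁ ∩ V₁ ∩ V₃ ∩ Sᶜ
  let Q := U₂ ∩ V₂ ∩ U₃ ∩ Sᶜ
  have oP : IsOpen P := ((oU₁.inter oV₁).inter oV₃).inter hS.isClosed.isOpen_compl
  have oQ : IsOpen Q := ((oU₂.inter oV₂).inter oU₃).inter hS.isClosed.isOpen_compl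
  have sP : Sw ⊆ P := by
    refine fun p hp => ⟨⟨⟨sU₁ hp, sV₁ hp⟩, sV₃ hp⟩, ?_⟩
    rintro ⟨j, ⟨hj1, hj2⟩, rfl⟩
    exact Ow j hj1 hj2 hp
  have sQ : Su ⊆ Q := by
    refine fun p hp => ⟨⟨⟨sU₂ hp, sV₂ hp⟩, sU₃ hp⟩, ?_⟩
    rintro ⟨j, ⟨hj1, hj2⟩, rfl⟩
    exact Ou j hj1 hj2 hp
  obtain ⟨φ, φn, φx, φs⟩ := mv_of_preconnected oP (isPreconnected_seg x w) sP xw ww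
  obtain ⟨ψ, ψn, ψx, ψs⟩ := mv_of_preconnected oQ (isPreconnected_seg x u) sQ uu xu
  let g : ℂ ≃ₜ ℂ := h.trans (φ.trans (h.symm.trans (ψ.trans h)))
  have gn : Nice g := hN.trans (φn.trans (hN.symm.trans (ψn.trans hN)))
  have gapp : ∀ p, g p = h (ψ (h.symm (φ (h p)))) := fun p => rfl
  have gf : ∀ p, g p ≠ p := by
    intro p hp
    rw [gapp] at hp
    by_cases k1 : h p ∈ P
    · have k2 : φ (h p) ∈ P := supp_preserve φs k1
      by_cases k3 : h.symm (φ (h p)) ∈ Q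
      · have k4 := supp_preserve ψs k3
        refine d₃ _ k4.1.2 ?_
        simp only [Function.comp_apply]
        rw [hp]; exact k1.1.2
      · rw [ψs _ k3, Homeomorph.apply_symm_apply] at hp
        rw [hp] at k2
        exact d₁ p k2.1.1.1 k1.1.1.2
    · rw [φs _ k1, Homeomorph.symm_apply_apply] at hp
      by_cases k3 : p ∈ Q
      · have k4 := supp_preserve ψs k3
        rw [← hp] at k3
        exact d₂ _ k4.1.1.1 k3.1.1.2
      · rw [ψs _ k3] at hp
        exact hf p hp
  have git : ∀ j, j + 1 < n → g^[j] (h x) = h^[j + 1] x := by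
    intro j
    induction j with
    | zero => intro _; rfl
    | succ j ih =>
      intro hj
      rw [Function.iterate_succ_apply', ih (by omega), gapp,
        ← Function.iterate_succ_apply' (f := h), φs, Function.iterate_succ_apply' (f := h) (j + 1),
        Homeomorph.symm_apply_apply, ψs]
      · rintro ⟨-, h'⟩; exact h' ⟨j + 1, ⟨by omega, by omega⟩, rfl⟩
      · rintro ⟨-, h'⟩; exact h' ⟨j + 1 + 1, ⟨by omega, by omega⟩, rfl⟩
  obtain ⟨k, rfl⟩ : ∃ k, n = k + 2 := ⟨n - 2, by omega⟩
  refine IH (k + 1) (by omega) (by omega) g gn gf (h x) ?_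
  rw [Function.iterate_succ_apply', git k (by omega), gapp,
    ← Function.iterate_succ_apply' (f := h), hx, φx, hw, Homeomorph.symm_apply_apply, ψx]

lemma franks_aux (s : ℂ → ℂ → Prop) (hs : Equivalence s)
    (hom : ∀ a b, s a b → ∃ φ : ℂ ≃ₜ ℂ, Nice φ ∧ φ a = b ∧ (∀ p, s (φ p) p) ∧
      ∀ p, ¬ s p a → φ p = p)
    (h : ℂ ≃ₜ ℂ) (hN : Nice h) (free : ∀ p, ¬ s p (h p)) (N : ℕ) (hN1 : 1 ≤ N) (p : ℕ → ℂ)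
    (hp : ∀ i < N, s (p (i + 1)) (h (p i))) (hcl : p N = p 0) : False := by
  induction N using Nat.strong_induction_on generalizing p with
  | _ N IH =>
  by_cases hsp : ∃ i j, i < j ∧ j < N ∧ s (h (p i)) (h (p j))
  · obtain ⟨i, j, hij, hjN, hsij⟩ := hsp
    refine IH (j - i) (by omega) (by omega)
      (fun k => if k = j - i then p (i + 1) else p (i + 1 + k)) ?_ ?_
    · intro k hk
      simp only [hk.ne, if_false]
      by_cases hk' : k + 1 = j - i
      · simp only [hk', if_true]
        rw [show i + 1 + k = j by omega]
        exact hs.trans (hp i (by omega)) hsij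
      · simp only [hk', if_false]
        exact hp (i + 1 + k) (by omega)
    · have : (0 : ℕ) ≠ j - i := by omega
      simp [this]
  · push Not at hsp
    have build : ∀ m ≤ N, ∃ Φ : ℂ ≃ₜ ℂ, Nice Φ ∧ (∀ q, s (Φ q) q) ∧
        (∀ i < m, Φ (h (p i)) = p (i + 1)) ∧
        ∀ q, (∀ i < m, ¬ s q (h (p i))) → Φ q = q := by
      intro m
      induction m with
      | zero =>
        intro _
        exact ⟨Homeomorph.refl ℂ, nice_refl, fun q => hs.refl q, by simp, fun q _ => rfl⟩
      | succ m ih =>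
        intro hm
        obtain ⟨Φ, Φn, Φs, Φp, Φf⟩ := ih (by omega)
        obtain ⟨φ, φn, φx, φs, φf⟩ := hom _ _ (hs.symm (hp m (by omega)))
        refine ⟨Φ.trans φ, Φn.trans φn, fun q => hs.trans (φs _) (Φs q), ?_, ?_⟩
        · intro i hi
          rw [Homeomorph.trans_apply]
          rcases Nat.lt_succ_iff_lt_or_eq.mp hi with h1 | h1
          · rw [Φp i h1, φf]
            intro h2
            exact hsp i m h1 (by omega) (hs.trans (hs.symm (hp i (by omega))) h2)
          · subst h1
            rw [Φf, φx]
            intro k hk h2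
            exact hsp k i hk (by omega) (hs.symm h2)
        · intro q hq
          rw [Homeomorph.trans_apply, Φf q (fun i hi => hq i (by omega)), φf q (hq m (by omega))]
    obtain ⟨Φ, Φn, Φs, Φp, -⟩ := build N le_rfl
    refine noPer_all N hN1 (h.trans Φ) (hN.trans Φn) ?_ (p 0) ?_
    · intro q hq
      have := Φs (h q)
      rw [Homeomorph.trans_apply] at hq
      rw [hq] at this
      exact free q this
    · have : ∀ k ≤ N, (h.trans Φ)^[k] (p 0) = p k := by
        intro k
        induction k with
        | zero => intro _; rfl
        | succ k ih =>
          intro hk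
          rw [Function.iterate_succ_apply', ih (by omega), Homeomorph.trans_apply,
            Φp k (by omega)]
      rw [this N le_rfl, hcl]

lemma chain_of_transGen {st : ℂ → ℂ → Prop} {x y : ℂ} (h : Relation.TransGen st x y) :
    ∃ N, 1 ≤ N ∧ ∃ p : ℕ → ℂ, p 0 = x ∧ p N = y ∧ ∀ i < N, st (p i) (p (i + 1)) := by
  induction h with
  | @single b hab =>
    refine ⟨1, le_rfl, fun k => if k = 0 then x else b, by simp, by simp, ?_⟩
    intro i hi
    have : i = 0 := by omega
    subst this
    simpa using hab
  | @tail b c _ hbc ih =>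
    obtain ⟨N, hN, p, p0, pN, hp⟩ := ih
    refine ⟨N + 1, by omega, fun k => if k ≤ N then p k else c, by simpa using p0, by simp, ?_⟩
    intro i hi
    rcases Nat.lt_succ_iff_lt_or_eq.mp hi with h1 | h1
    · simp only [h1.le, if_true, show i + 1 ≤ N from h1]
      exact hp i h1
    · subst h1
      simpa [pN] using hbc

lemma iter_add_int {h : ℂ → ℂ} (hT : ∀ p (k : ℤ), h (p + k) = h p + k) (n : ℕ) (p : ℂ) (k : ℤ) :
    h^[n] (p + k) = h^[n] p + k := by
  induction n with
  | zero => rfl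
  | succ n ih => rw [Function.iterate_succ_apply', ih, hT, Function.iterate_succ_apply']

theorem franks {h : ℂ ≃ₜ ℂ} (hN : Nice h) (hf : ∀ p, h p ≠ p)
    (hT : ∀ p (k : ℤ), h (p + k) = h p + k) {z : ℂ} {ε : ℝ} (hε : 0 < ε) (hε2 : ε ≤ 1 / 2)
    (hfree : ∀ p ∈ Metric.ball z ε, h p ∉ Metric.ball z ε)
    {n m : ℕ} (hn : 1 ≤ n) (hm : 1 ≤ m) {a b : ℤ} (ha : 0 < a) (hb : b < 0)
    (hna : dist (h^[n] z) (z + a) < ε) (hmb : dist (h^[m] z) (z + b) < ε) : False := by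
  let s : ℂ → ℂ → Prop := fun p q =>
    p = q ∨ ∃ k : ℤ, p ∈ Metric.ball (z + k) ε ∧ q ∈ Metric.ball (z + k) ε
  have uniq : ∀ q (k l : ℤ), q ∈ Metric.ball (z + k) ε → q ∈ Metric.ball (z + l) ε → k = l := by
    intro q k l hk hl
    rw [Metric.mem_ball] at hk hl
    have h1 : dist (z + k) (z + l) < 1 := by
      calc _ ≤ dist (z + k) q + dist q (z + l) := dist_triangle _ _ _
        _ < 1 := by rw [dist_comm (z + k)]; linarith
    rw [dist_add_left, dist_eq_norm, ← Int.cast_sub, Complex.norm_intCast] at h1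
    have : |k - l| < 1 := by exact_mod_cast h1
    have := Int.abs_lt_one_iff.mp this
    omega
  have hs : Equivalence s := by
    refine ⟨fun _ => Or.inl rfl, ?_, ?_⟩
    · rintro p q (rfl | ⟨k, h1, h2⟩)
      · exact Or.inl rfl
      · exact Or.inr ⟨k, h2, h1⟩
    · rintro p q t (rfl | ⟨k, h1, h2⟩) (rfl | ⟨l, h3, h4⟩)
      · exact Or.inl rfl
      · exact Or.inr ⟨l, h3, h4⟩
      · exact Or.inr ⟨k, h1, h2⟩
      · have := uniq _ _ _ h2 h3
        subst this
        exact Or.inr ⟨k, h1, h4⟩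
  have hom : ∀ a b, s a b → ∃ φ : ℂ ≃ₜ ℂ, Nice φ ∧ φ a = b ∧ (∀ p, s (φ p) p) ∧
      ∀ p, ¬ s p a → φ p = p := by
    rintro a b (rfl | ⟨k, h1, h2⟩)
    · exact ⟨Homeomorph.refl ℂ, nice_refl, rfl, fun p => Or.inl rfl, fun p _ => rfl⟩
    · obtain ⟨φ, φn, φx, φs⟩ := mv_of_preconnected Metric.isOpen_ball
        (convex_ball (z + (k : ℂ)) ε).isPreconnected subset_rfl h1 h2
      refine ⟨φ, φn, φx, fun p => ?_, fun p hp => φs p fun hp' => hp (Or.inr ⟨k, hp', h1⟩)⟩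
      by_cases hp : p ∈ Metric.ball (z + (k : ℂ)) ε
      · exact Or.inr ⟨k, supp_preserve φs hp, hp⟩
      · exact Or.inl (φs p hp)
  have free : ∀ p, ¬ s p (h p) := by
    rintro p (h1 | ⟨k, h1, h2⟩)
    · exact hf p h1.symm
    · refine hfree (p + (-k : ℤ)) ?_ ?_
      · rw [Metric.mem_ball, dist_eq_norm] at h1 ⊢
        convert h1 using 2; push_cast; ring
      · rw [hT]
        rw [Metric.mem_ball, dist_eq_norm] at h2 ⊢
        convert h2 using 2; push_cast; ring
  let st : ℂ → ℂ → Prop := fun x y => s y (h x)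
  have hop : ∀ (j : ℕ), 1 ≤ j → ∀ c : ℤ, dist (h^[j] z) (z + c) < ε → ∀ k : ℤ,
      Relation.TransGen st (z + k) (z + (k + c : ℤ)) := by
    intro j hj c hc k
    obtain ⟨i, rfl⟩ : ∃ i, j = i + 1 := ⟨j - 1, by omega⟩
    have h1 : ∀ i, Relation.ReflTransGen st (z + k) (h^[i] (z + k)) := by
      intro i
      induction i with
      | zero => exact Relation.ReflTransGen.refl
      | succ i ih =>
        refine ih.tail ?_
        rw [Function.iterate_succ_apply']
        exact hs.refl _
    refine Relation.TransGen.tail' (h1 i) ?_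
    change s _ _
    rw [← Function.iterate_succ_apply' (f := h), iter_add_int hT]
    refine Or.inr ⟨k + c, Metric.mem_ball_self hε, ?_⟩
    rw [Metric.mem_ball, dist_eq_norm] at *
    convert hc using 2; push_cast; ring
  have hops : ∀ (c : ℤ), (∀ k : ℤ, Relation.TransGen st (z + k) (z + (k + c : ℤ))) →
      ∀ (t : ℕ) (k : ℤ), Relation.TransGen st (z + k) (z + (k + (t + 1) * c : ℤ)) := by
    intro c hc t
    induction t with
    | zero => intro k; simpa using hc k
    | succ t ih =>
      intro k
      have := (ih k).trans (hc _)
      convert this using 3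
      push_cast; ring
  have A := hops a (hop n hn a hna) ((-b).toNat - 1) 0
  have B := hops b (hop m hm b hmb) (a.toNat - 1) (a * (-b))
  have hA : (0 + ((((-b).toNat - 1 : ℕ) : ℤ) + 1) * a : ℤ) = a * (-b) := by
    have : ((((-b).toNat - 1 : ℕ) : ℤ) + 1) = -b := by omega
    rw [this]; ring
  have hB : (a * (-b) + (((a.toNat - 1 : ℕ) : ℤ) + 1) * b : ℤ) = 0 := by
    have : (((a.toNat - 1 : ℕ) : ℤ) + 1) = a := by omega
    rw [this]; ring
  rw [hA] at A
  rw [hB] at B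
  obtain ⟨N, hN1, p, p0, pN, hp⟩ := chain_of_transGen (A.trans B)
  exact franks_aux s hs hom h hN free N hN1 p hp (pN.trans p0.symm)

/-- identification of `ℂ` with the plane -/
def eC : ℂ ≃ₜ Plane := Complex.equivRealProdCLM.toHomeomorph

lemma eC_apply (z : ℂ) : eC z = (z.re, z.im) := rfl
lemma eC_symm_apply (p : Plane) : eC.symm p = ⟨p.1, p.2⟩ := by
  apply eC.injective; simp [eC_apply]

/-- the lift seen on `ℂ` -/
def toC (F : Plane ≃ₜ Plane) : ℂ ≃ₜ ℂ := eC.trans (F.trans eC.symm)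

lemma toC_apply (F : Plane ≃ₜ Plane) (z : ℂ) : toC F z = eC.symm (F (eC z)) := rfl

lemma prj_continuous : Continuous prj := by
  unfold prj
  exact ((AddCircle.continuous_mk' 1).comp continuous_fst).prodMk continuous_snd

lemma prj_add_int (p : Plane) (k : ℤ) : prj (p.1 + k, p.2) = prj p := by
  unfold prj
  ext
  · simp only [AddCircle.coe_add]
    have : ((k : ℝ) : AddCircle (1 : ℝ)) = 0 := by
      rw [AddCircle.coe_eq_zero_iff]; exact ⟨k, by simp⟩
    rw [this, add_zero]
  · rfl

lemma lift_structure (f : Ann ≃ₜ Ann) (F : Plane ≃ₜ Plane) (hiso : IsotopicToId f)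
    (hlift : IsLift f F) :
    ∃ Ht : unitInterval × Plane → Plane, Continuous Ht ∧ (∀ t, Function.Injective fun p => Ht (t, p)) ∧
      (∀ p, Ht (0, p) = p) ∧ (∀ t p (k : ℤ), Ht (t, (p.1 + k, p.2)) = ((Ht (t, p)).1 + k, (Ht (t, p)).2))
      ∧ ∃ c : ℝ, ∀ p, F p = ((Ht (1, p)).1 + c, (Ht (1, p)).2) := by
  obtain ⟨H, Hc, Hh, H0, H1⟩ := hiso
  have cov : IsCoveringMap ((↑) : ℝ → AddCircle (1 : ℝ)) := AddCircle.isCoveringMap_coe 1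
  let K : C(unitInterval × Ann, AddCircle (1 : ℝ)) :=
    ⟨fun q => (H q.1 q.2).1 - q.2.1, by
      have : Continuous fun q : unitInterval × Ann => H q.1 q.2 :=
        Hc.comp ((continuous_subtype_val.comp continuous_fst).prodMk continuous_snd)
      exact (continuous_fst.comp this).sub (continuous_fst.comp continuous_snd)⟩
  have K0 : ∀ a, K (0, a) = ((ContinuousMap.const Ann (0 : ℝ) a : ℝ) : AddCircle (1 : ℝ)) := by
    intro a; simp [K, H0]
  let D := cov.liftHomotopy K (ContinuousMap.const Ann (0 : ℝ)) K0
  have hD : ∀ q, ((D q : ℝ) : AddCircle (1 : ℝ)) = K q :=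
    fun q => congrFun (cov.liftHomotopy_lifts K (ContinuousMap.const Ann (0 : ℝ)) K0) q
  have hD0 : ∀ a, D (0, a) = 0 := cov.liftHomotopy_zero K (ContinuousMap.const Ann (0 : ℝ)) K0
  let Ht : unitInterval × Plane → Plane :=
    fun q => (q.2.1 + D (q.1, prj q.2), (H q.1 (prj q.2)).2)
  have pc := prj_continuous
  have Htc : Continuous Ht := by
    have h1 : Continuous fun q : unitInterval × Plane => H q.1 (prj q.2) :=
      Hc.comp ((continuous_subtype_val.comp continuous_fst).prodMk (pc.comp continuous_snd))
    have h2 : Continuous fun q : unitInterval × Plane => D (q.1, prj q.2) :=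
      D.continuous.comp (continuous_fst.prodMk (pc.comp continuous_snd))
    exact ((continuous_fst.comp continuous_snd).add h2).prodMk (continuous_snd.comp h1)
  have Htp : ∀ t p, prj (Ht (t, p)) = H t (prj p) := by
    intro t p
    have := hD (t, prj p)
    ext
    · simp only [prj, Ht, AddCircle.coe_add]
      simp only [prj] at this
      rw [this]
      simp [K]
    · rfl
  refine ⟨Ht, Htc, ?_, ?_, ?_, ?_⟩
  · intro t p q hpq
    have hpq' : Ht (t, p) = Ht (t, q) := hpq
    have h1 : prj p = prj q := by
      obtain ⟨h, hh⟩ := Hh t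
      apply h.injective
      rw [← hh, ← hh, ← Htp, ← Htp, hpq']
    have h2 := congrArg Prod.fst hpq'
    simp only [Ht, h1] at h2
    have h3 : p.2 = q.2 := by
      have := congrArg (fun a : Ann => a.2) h1
      exact this
    exact Prod.ext (by linarith) h3
  · intro p
    simp [Ht, hD0, H0, prj]
  · intro t p k
    simp only [Ht, prj_add_int]
    ext <;> simp; ring
  · have hcst := cov.eq_of_comp_eq (A := Plane) (g₁ := fun p => (F p).1 - (Ht (1, p)).1)
      (g₂ := fun _ => (F 0).1 - (Ht (1, 0)).1) (by fun_prop) continuous_const (by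
        have key : ∀ p, (((F p).1 - (Ht (1, p)).1 : ℝ) : AddCircle (1 : ℝ)) = 0 := by
          intro p
          have h1 := hlift p
          rw [← H1] at h1
          have h2 := h1.trans (Htp 1 p).symm
          have h3 := congrArg Prod.fst h2
          simp only [prj] at h3
          rw [AddCircle.coe_sub, h3, sub_self]
        funext p
        simp only [Function.comp_apply]
        rw [key, key]) 0 rfl
    refine ⟨(F 0).1 - (Ht (1, 0)).1, fun p => ?_⟩
    have h1 : (F p).1 - (Ht (1, p)).1 = (F 0).1 - (Ht (1, 0)).1 := congrFun hcst p
    have h2 := hlift p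
    rw [← H1] at h2
    have h3 := congrArg Prod.snd (h2.trans (Htp 1 p).symm)
    exact Prod.ext (by simp only; linarith) h3

lemma lift_nice (f : Ann ≃ₜ Ann) (F : Plane ≃ₜ Plane) (hiso : IsotopicToId f)
    (hlift : IsLift f F) : Nice (toC F) ∧ ∀ p (k : ℤ), toC F (p + k) = toC F p + k := by
  obtain ⟨Ht, Hc, Hi, H0, HT, c, hF⟩ := lift_structure f F hiso hlift
  constructor
  · let G : unitInterval × ℂ → ℂ := fun q => eC.symm (Ht (q.1, eC q.2))
    have Gc : Continuous G := by fun_prop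
    have Gi : ∀ t p q, p ≠ q → G (t, p) - G (t, q) ≠ 0 := by
      intro t p q hpq h
      exact hpq (eC.injective (Hi t (eC.symm.injective (sub_eq_zero.mp h))))
    obtain ⟨L, Lc, Le, L0, Ls⟩ := exp_lift (A := {q : ℂ × ℂ // q.1 ≠ q.2})
      (fun q : unitInterval × {q : ℂ × ℂ // q.1 ≠ q.2} => (G (q.1, q.2.1.1) - G (q.1, q.2.1.2)) / (q.2.1.1 - q.2.1.2))
      (Continuous.div (by fun_prop) (by fun_prop) (fun q => sub_ne_zero.mpr q.2.2))
      (fun q => div_ne_zero (Gi _ _ _ q.2.2) (sub_ne_zero.mpr q.2.2))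
      (fun a => by
        simp only [G, H0, Homeomorph.symm_apply_apply]
        exact div_self (sub_ne_zero.mpr a.2))
    classical
    refine ⟨fun q => if h : q.1 ≠ q.2 then L (1, ⟨q, h⟩) else 0, ?_, ?_, ?_⟩
    · rw [continuousOn_iff_continuous_domRestrict]
      have hc : Continuous fun q : {q : ℂ × ℂ // q.1 ≠ q.2} => L (1, q) := by fun_prop
      refine hc.congr fun q => ?_
      have h2 : (if h : q.1.1 ≠ q.1.2 then L (1, ⟨q.1, h⟩) else 0) = L (1, q) := dif_pos q.2
      exact h2.symm
    · intro p q hpq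
      simp only
      rw [dif_pos hpq, dif_pos hpq.symm]
      apply Ls
      intro t
      simp only
      rw [← neg_sub (G (t, q)), ← neg_sub q, neg_div_neg_eq]
    · intro p q hpq
      simp only
      rw [dif_pos hpq, Le]
      simp only
      rw [mul_div_cancel₀ _ (sub_ne_zero.mpr hpq)]
      simp only [toC_apply, hF, G, eC_symm_apply]
      apply Complex.ext <;> simp
  · intro p k
    have := HT 1 (eC p) k
    have e : eC (p + k) = ((eC p).1 + k, (eC p).2) := by simp [eC_apply]
    simp only [toC_apply, hF, e, this, eC_symm_apply]
    apply Complex.ext <;> simp; ring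

lemma nice_iter {h : ℂ ≃ₜ ℂ} (hN : Nice h) (q : ℕ) : ∃ G : ℂ ≃ₜ ℂ, Nice G ∧ ∀ x, G x = h^[q] x := by
  induction q with
  | zero => exact ⟨Homeomorph.refl ℂ, nice_refl, fun x => rfl⟩
  | succ n ih =>
    obtain ⟨G, hG, e⟩ := ih
    refine ⟨G.trans h, hG.trans hN, fun x => ?_⟩
    rw [Function.iterate_succ_apply', ← e]; rfl

lemma nice_add (c : ℂ) : Nice (Homeomorph.addRight c) :=
  ⟨fun _ => 0, continuousOn_const, fun _ _ _ => rfl, fun p q _ => by simp⟩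

lemma exists_G {h : ℂ ≃ₜ ℂ} (hN : Nice h) (q : ℕ) (p : ℤ) :
    ∃ G : ℂ ≃ₜ ℂ, Nice G ∧ ∀ x, G x = h^[q] x - p := by
  obtain ⟨G, hG, e⟩ := nice_iter hN q
  refine ⟨G.trans (Homeomorph.addRight (-(p : ℂ))), hG.trans (nice_add _), fun x => ?_⟩
  simp [e, sub_eq_add_neg]

lemma iter_G {h G : ℂ → ℂ} (hT : ∀ p (k : ℤ), h (p + k) = h p + k) (q : ℕ) (p : ℤ)
    (hG : ∀ x, G x = h^[q] x - p) (j : ℕ) (x : ℂ) :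
    G^[j] x = h^[q * j] x + ((-(p * j) : ℤ) : ℂ) := by
  induction j with
  | zero => simp
  | succ n ih =>
    rw [Function.iterate_succ_apply', ih, hG, iter_add_int hT, ← Function.iterate_add_apply,
      Nat.mul_succ, add_comm q]
    push_cast; ring

/-- an approximate return of `z` -/
def Ret (h : ℂ → ℂ) (z : ℂ) (ε : ℝ) (n : ℕ) (d : ℤ) : Prop :=
  1 ≤ n ∧ dist (h^[n] z) (z + d) < ε

lemma Ret.mono {h : ℂ → ℂ} {z : ℂ} {ε ε' : ℝ} {n : ℕ} {d : ℤ} (hr : Ret h z ε n d) (hle : ε ≤ ε') :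
    Ret h z ε' n d := ⟨hr.1, hr.2.trans_le hle⟩

lemma ret_add {h : ℂ → ℂ} (hc : Continuous h) (hT : ∀ p (k : ℤ), h (p + k) = h p + k)
    {z : ℂ} {ε : ℝ} {n' : ℕ} {d' : ℤ} (hr : Ret h z ε n' d') :
    ∃ δ > 0, ∀ n d, Ret h z δ n d → Ret h z ε (n + n') (d + d') := by
  have hs : 0 < ε - dist (h^[n'] z) (z + d') := sub_pos.mpr hr.2
  obtain ⟨δ, hδ, H⟩ := Metric.continuous_iff.mp (hc.iterate n') z _ hs
  refine ⟨δ, hδ, fun n d hnd => ⟨by have := hnd.1; omega, ?_⟩⟩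
  have h1 : dist (h^[n] z - d) z < δ := by
    have := hnd.2
    rw [dist_eq_norm] at this ⊢
    convert this using 2; ring
  have h2 := H _ h1
  have h3 : h^[n + n'] z = h^[n'] (h^[n] z - d) + d := by
    rw [← iter_add_int hT, sub_add_cancel, add_comm, Function.iterate_add_apply]
  rw [h3]
  have h4 : dist (h^[n'] (h^[n] z - d) + d) (z + ((d + d' : ℤ) : ℂ))
      = dist (h^[n'] (h^[n] z - d)) (z + d') := by
    rw [dist_eq_norm, dist_eq_norm]; congr 1; push_cast; ring
  rw [h4]
  have := dist_triangle (h^[n'] (h^[n] z - d)) (h^[n'] z) (z + d')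
  linarith

lemma ret_dvd {h : ℂ → ℂ} (hc : Continuous h) (hT : ∀ p (k : ℤ), h (p + k) = h p + k)
    {z : ℂ} (P : ℕ → ℤ → Prop) (hP : ∀ n d n' d', P n d → P n' d' → P (n + n') (d + d'))
    (hr : ∀ ε > 0, ∃ n d, Ret h z ε n d ∧ P n d) (q : ℕ) (hq : 1 ≤ q) :
    ∀ ε > 0, ∃ n d, Ret h z ε n d ∧ P n d ∧ q ∣ n := by
  have : NeZero q := ⟨by omega⟩
  let S : Set (ZMod q) := {c | ∀ ε > 0, ∃ n d, Ret h z ε n d ∧ P n d ∧ (n : ZMod q) = c}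
  have hne : S.Nonempty := by
    by_contra hS
    rw [Set.not_nonempty_iff_eq_empty] at hS
    have : ∀ c : ZMod q, ∃ ε > 0, ∀ n d, Ret h z ε n d → P n d → (n : ZMod q) ≠ c := by
      intro c
      have : c ∉ S := by rw [hS]; exact Set.notMem_empty c
      simp only [S, Set.mem_ofPred_eq] at this
      push Not at this
      exact this
    choose e he H using this
    obtain ⟨c, -, hcm⟩ := Finset.exists_min_image Finset.univ e ⟨0, Finset.mem_univ _⟩
    obtain ⟨n, d, h1, h2⟩ := hr (e c) (he c)
    exact H n n d (h1.mono (hcm _ (Finset.mem_univ _))) h2 rfl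
  have hadd : ∀ a ∈ S, ∀ b ∈ S, a + b ∈ S := by
    intro a ha b hb ε hε
    obtain ⟨n', d', h1, h2, h3⟩ := hb ε hε
    obtain ⟨δ, hδ, H⟩ := ret_add hc hT h1
    obtain ⟨n, d, h4, h5, h6⟩ := ha δ hδ
    exact ⟨n + n', d + d', H _ _ h4, hP _ _ _ _ h5 h2, by rw [Nat.cast_add, h3, h6]⟩
  obtain ⟨c, hcS⟩ := hne
  have hmul : ∀ k : ℕ, ((k + 1 : ℕ) : ZMod q) * c ∈ S := by
    intro k
    induction k with
    | zero => simpa using hcS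
    | succ k ih =>
      have := hadd _ ih _ hcS
      convert this using 1
      push_cast; ring
  have h0 : (0 : ZMod q) ∈ S := by
    have := hmul (q - 1)
    rw [Nat.sub_add_cancel hq] at this
    simpa using this
  intro ε hε
  obtain ⟨n, d, h1, h2, h3⟩ := h0 ε hε
  exact ⟨n, d, h1, h2, (ZMod.natCast_eq_zero_iff n q).mp h3⟩

lemma franks_ret {h : ℂ ≃ₜ ℂ} (hN : Nice h) (hT : ∀ p (k : ℤ), h (p + k) = h p + k) {z : ℂ}
    (q : ℕ) (p : ℤ) (hf : ∀ x, h^[q] x ≠ x + p) {ε : ℝ} (hε : 0 < ε)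
    (hε2 : ε ≤ 1 / 2) (hfree : ∀ x ∈ Metric.ball z ε, h^[q] x - p ∉ Metric.ball z ε)
    {j j' : ℕ} {d d' : ℤ} (hr : Ret h z ε (q * j) d) (hr' : Ret h z ε (q * j') d')
    (hd : p * j < d) (hd' : d' < p * j') : False := by
  obtain ⟨G, hG, e⟩ := exists_G hN q p
  have pos : ∀ j d, Ret h z ε (q * j) d → 1 ≤ j := by
    intro j d hr
    rcases Nat.eq_zero_or_pos j with h0 | h0
    · have := hr.1; simp [h0] at this
    · exact h0
  have cl : ∀ j d, Ret h z ε (q * j) d → dist (G^[j] z) (z + ((d - p * j : ℤ) : ℂ)) < ε := by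
    intro j d hr
    rw [iter_G hT q p e]
    convert hr.2 using 1
    rw [dist_eq_norm, dist_eq_norm]; congr 1; push_cast; ring
  refine franks hG (fun x hx => ?_) (fun x k => ?_) hε hε2 (fun x hx => ?_) (pos _ _ hr) (pos _ _ hr')
    (a := d - p * j) (b := d' - p * j') (by linarith) (by linarith) (cl _ _ hr) (cl _ _ hr')
  · rw [e] at hx
    exact hf x (sub_eq_iff_eq_add.mp hx)
  · rw [e, e, iter_add_int hT]; ring
  · rw [e]; exact hfree x hx

lemma not_hi_lo {h : ℂ ≃ₜ ℂ} (hN : Nice h) (hT : ∀ p (k : ℤ), h (p + k) = h p + k) {z : ℂ}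
    (q : ℕ) (hq : 1 ≤ q) (p : ℤ) (hf : ∀ x, h^[q] x ≠ x + p)
    (hi : ∀ ε > 0, ∃ n d, Ret h z ε n d ∧ p * n < q * d)
    (lo : ∀ ε > 0, ∃ n d, Ret h z ε n d ∧ q * d < p * n) : False := by
  have hi' := ret_dvd h.continuous hT (fun n d => p * n < q * d)
    (fun n d n' d' h1 h2 => by push_cast; linarith) hi q hq
  have lo' := ret_dvd h.continuous hT (fun n d => q * d < p * n)
    (fun n d n' d' h1 h2 => by push_cast; linarith) lo q hq
  have hz : h^[q] z - p ≠ z := fun hx => hf z (sub_eq_iff_eq_add.mp hx)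
  have hs : 0 < dist (h^[q] z - p) z := dist_pos.mpr hz
  obtain ⟨δ, hδ, H⟩ := Metric.continuous_iff.mp ((h.continuous.iterate q).sub
    (continuous_const (y := (p : ℂ)))) z (dist (h^[q] z - p) z / 2) (half_pos hs)
  obtain ⟨ε, hε, hε1, hε2, hε3⟩ : ∃ ε > 0, ε ≤ 1 / 2 ∧ ε ≤ δ ∧ ε ≤ dist (h^[q] z - p) z / 2 :=
    ⟨min (1 / 2) (min δ (dist (h^[q] z - p) z / 2)), by positivity, min_le_left _ _,
      (min_le_right _ _).trans (min_le_left _ _), (min_le_right _ _).trans (min_le_right _ _)⟩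
  obtain ⟨n, d, r1, r2, ⟨j, rfl⟩⟩ := hi' ε hε
  obtain ⟨n', d', s1, s2, ⟨j', rfl⟩⟩ := lo' ε hε
  have hq' : (0 : ℤ) < q := by exact_mod_cast hq
  refine franks_ret hN hT q p hf hε hε1 (fun x hx hx2 => ?_) r1 s1 ?_ ?_
  · rw [Metric.mem_ball] at hx hx2
    have h1 : dist (h^[q] x - p) (h^[q] z - p) < dist (h^[q] z - p) z / 2 := H x (by linarith)
    have := dist_triangle_left (h^[q] z - p) z (h^[q] x - p)
    linarith
  · push_cast at r2
    exact lt_of_mul_lt_mul_left (by linarith) hq'.le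
  · push_cast at s2
    exact lt_of_mul_lt_mul_left (by linarith) hq'.le

lemma far_ball {h : ℂ ≃ₜ ℂ} (z : ℂ) : ∃ M : ℝ, ∀ p : ℤ, M < |(p : ℝ)| →
    ∀ x ∈ Metric.ball z (1 / 2), h^[1] x - p ∉ Metric.ball z (1 / 2) := by
  obtain ⟨M, hM⟩ := ((isCompact_closedBall z (1 / 2 : ℝ)).image h.continuous).isBounded.subset_closedBall z
  refine ⟨M + 1, fun p hp x hx hx2 => ?_⟩
  have h1 : dist (h x) z ≤ M := hM ⟨x, Metric.ball_subset_closedBall hx, rfl⟩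
  rw [Metric.mem_ball, dist_eq_norm] at hx2
  rw [dist_eq_norm] at h1
  simp only [Function.iterate_one] at hx2
  have h2 : ‖(p : ℂ)‖ ≤ ‖h x - z‖ + ‖h x - p - z‖ := by
    have := norm_sub_le (h x - z) (h x - p - z)
    rwa [show (h x - z) - (h x - p - z) = (p : ℂ) by ring] at this
  rw [Complex.norm_intCast] at h2
  linarith

lemma not_all_hi {h : ℂ ≃ₜ ℂ} (hN : Nice h) (hT : ∀ p (k : ℤ), h (p + k) = h p + k) {z : ℂ}
    (hf : ∀ q : ℕ, 1 ≤ q → ∀ (p : ℤ) x, h^[q] x ≠ x + p)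
    (hr : ∀ ε > 0, ∃ n d, Ret h z ε n d) :
    ∃ p : ℤ, ∃ ε > 0, ∀ n d, Ret h z ε n d → d ≤ p * n := by
  obtain ⟨M, hM⟩ := far_ball (h := h) z
  obtain ⟨n, d, r⟩ := hr (1 / 2) (by norm_num)
  obtain ⟨k, hk⟩ := exists_nat_gt M
  have hn := r.1
  refine ⟨k + |d| + 1, 1 / 2, by norm_num, fun n' d' r' => ?_⟩
  by_contra hlt
  push Not at hlt
  refine franks_ret hN hT 1 (k + |d| + 1) (hf 1 le_rfl _) (by norm_num) le_rfl (hM _ ?_)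
    (j := n') (j' := n) (by rwa [one_mul]) (by rwa [one_mul]) hlt ?_
  · have : (0 : ℝ) ≤ |(d : ℝ)| := abs_nonneg _
    push_cast
    rw [abs_of_nonneg (by positivity)]
    linarith
  · have : (1 : ℤ) ≤ n := by exact_mod_cast hn
    have h1 := le_abs_self d
    have h2 := abs_nonneg d
    nlinarith

lemma not_all_lo {h : ℂ ≃ₜ ℂ} (hN : Nice h) (hT : ∀ p (k : ℤ), h (p + k) = h p + k) {z : ℂ}
    (hf : ∀ q : ℕ, 1 ≤ q → ∀ (p : ℤ) x, h^[q] x ≠ x + p)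
    (hr : ∀ ε > 0, ∃ n d, Ret h z ε n d) :
    ∃ p : ℤ, ∃ ε > 0, ∀ n d, Ret h z ε n d → p * n ≤ d := by
  obtain ⟨M, hM⟩ := far_ball (h := h) z
  obtain ⟨n, d, r⟩ := hr (1 / 2) (by norm_num)
  obtain ⟨k, hk⟩ := exists_nat_gt M
  have hn := r.1
  refine ⟨-(k + |d| + 1), 1 / 2, by norm_num, fun n' d' r' => ?_⟩
  by_contra hlt
  push Not at hlt
  refine franks_ret hN hT 1 (-(k + |d| + 1)) (hf 1 le_rfl _) (by norm_num) le_rfl (hM _ ?_)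
    (j := n) (j' := n') (by rwa [one_mul]) (by rwa [one_mul]) ?_ hlt
  · have : (0 : ℝ) ≤ |(d : ℝ)| := abs_nonneg _
    push_cast
    rw [abs_neg, abs_of_nonneg (by positivity)]
    linarith
  · have : (1 : ℤ) ≤ n := by exact_mod_cast hn
    have h1 := neg_abs_le d
    have h2 := abs_nonneg d
    nlinarith

lemma exists_rho {h : ℂ ≃ₜ ℂ} (hN : Nice h) (hT : ∀ p (k : ℤ), h (p + k) = h p + k) {z : ℂ}
    (hf : ∀ q : ℕ, 1 ≤ q → ∀ (p : ℤ) x, h^[q] x ≠ x + p)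
    (hr : ∀ ε > 0, ∃ n d, Ret h z ε n d) :
    ∃ ρ : ℝ, ∀ η > 0, ∃ ε > 0, ∀ n d, Ret h z ε n d → |(d : ℝ) / n - ρ| < η := by
  let S : Set ℝ := {t | ∃ (p : ℤ) (q : ℕ), 1 ≤ q ∧ t = p / q ∧
    ∀ ε > 0, ∃ n d, Ret h z ε n d ∧ p * n < q * d}
  have bdd : BddAbove S := by
    obtain ⟨p, ε, hε, H⟩ := not_all_hi hN hT hf hr
    refine ⟨p, ?_⟩
    rintro _ ⟨a, b, hb, rfl, hab⟩
    obtain ⟨n, d, r, hl⟩ := hab ε hε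
    have h1 := H n d r
    have hb' : (0 : ℝ) < b := by exact_mod_cast hb
    have hn' : (0 : ℝ) < n := by exact_mod_cast r.1
    have h1' : (d : ℝ) ≤ p * n := by exact_mod_cast h1
    have hl' : (a : ℝ) * n < b * d := by exact_mod_cast hl
    rw [div_le_iff₀ hb']
    have : (a : ℝ) * n < (p * b) * n := by nlinarith
    exact (lt_of_mul_lt_mul_right this hn'.le).le
  have ne : S.Nonempty := by
    obtain ⟨p, ε0, hε0, H⟩ := not_all_lo hN hT hf hr
    refine ⟨_, p - 1, 1, le_rfl, rfl, fun ε hε => ?_⟩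
    obtain ⟨n, d, r⟩ := hr (min ε ε0) (lt_min hε hε0)
    refine ⟨n, d, r.mono (min_le_left _ _), ?_⟩
    have := H n d (r.mono (min_le_right _ _))
    have hn : (1 : ℤ) ≤ n := by exact_mod_cast r.1
    push_cast
    linarith
  refine ⟨sSup S, fun η hη => ?_⟩
  obtain ⟨u, hu1, hu2⟩ := exists_rat_btwn (lt_add_of_pos_right (sSup S) hη)
  have huS : (u : ℝ) ∉ S := fun hu => absurd (le_csSup bdd hu) (not_le.mpr hu1)
  obtain ⟨ε1, hε1, H1⟩ : ∃ ε > 0, ∀ n d, Ret h z ε n d → u.den * d ≤ u.num * n := by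
    by_contra hcon
    push Not at hcon
    exact huS ⟨u.num, u.den, u.den_pos, Rat.cast_def u, hcon⟩
  obtain ⟨t, ⟨a, b, hb, rfl, hab⟩, ht⟩ := exists_lt_of_lt_csSup ne (sub_lt_self (sSup S) hη)
  obtain ⟨ε2, hε2, H2⟩ : ∃ ε > 0, ∀ n d, Ret h z ε n d → a * n ≤ b * d := by
    by_contra hcon
    push Not at hcon
    exact not_hi_lo hN hT b hb a (hf b hb a) hab hcon
  refine ⟨min ε1 ε2, lt_min hε1 hε2, fun n d r => ?_⟩
  have g1 : (u.den : ℝ) * d ≤ u.num * n := by exact_mod_cast H1 n d (r.mono (min_le_left _ _))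
  have g2 : (a : ℝ) * n ≤ b * d := by exact_mod_cast H2 n d (r.mono (min_le_right _ _))
  have hb' : (0 : ℝ) < b := by exact_mod_cast hb
  have hd' : (0 : ℝ) < u.den := by exact_mod_cast u.den_pos
  have hn' : (0 : ℝ) < n := by exact_mod_cast r.1
  have k1 : (d : ℝ) / n ≤ u := by
    rw [Rat.cast_def, div_le_div_iff₀ hn' hd']; linarith
  have k2 : (a : ℝ) / b ≤ d / n := by
    rw [div_le_div_iff₀ hb' hn']; linarith
  rw [abs_lt]; constructor <;> linarith

lemma prj_eq_iff {p q : Plane} (hpq : prj p = prj q) : ∃ k : ℤ, p = (q.1 + k, q.2) := by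
  have h1 : ((p.1 : ℝ) : AddCircle (1 : ℝ)) = (q.1 : ℝ) := by
    have := congrArg (fun a : Ann => a.1) hpq
    exact this
  have h2 : p.2 = q.2 := by
    have := congrArg (fun a : Ann => a.2) hpq
    exact this
  have h3 : ((p.1 - q.1 : ℝ) : AddCircle (1 : ℝ)) = 0 := by
    rw [AddCircle.coe_sub, h1, sub_self]
  obtain ⟨k, hk⟩ := (AddCircle.coe_eq_zero_iff 1).mp h3
  refine ⟨k, Prod.ext ?_ h2⟩
  simp at hk
  simp only
  linarith

lemma prj_isOpenMap : IsOpenMap prj := by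
  have h1 : IsOpenMap ((↑) : ℝ → AddCircle (1 : ℝ)) := QuotientAddGroup.isOpenMap_coe
  exact h1.prodMap IsOpenMap.id

lemma exists_int_close {ι : Type*} {l : Filter ι} {w : ι → Plane} {zt : Plane}
    (hw : Tendsto (fun k => prj (w k)) l (𝓝 (prj zt))) (ε : ℝ) (hε : 0 < ε) :
    ∀ᶠ k in l, ∃ d : ℤ, dist (eC.symm (w k)) (eC.symm zt + d) < ε := by
  have hU : eC.symm ⁻¹' Metric.ball (eC.symm zt) ε ∈ 𝓝 zt :=
    eC.symm.continuous.continuousAt (Metric.ball_mem_nhds _ hε)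
  filter_upwards [hw (prj_isOpenMap.image_mem_nhds hU)] with k hk
  obtain ⟨u, hu, hu2⟩ := hk
  obtain ⟨d, hd⟩ := prj_eq_iff hu2.symm
  refine ⟨d, ?_⟩
  have hu' : dist (eC.symm u) (eC.symm zt) < ε := hu
  rw [dist_eq_norm] at hu' ⊢
  convert hu' using 2
  rw [hd]
  simp only [eC_symm_apply]
  apply Complex.ext <;> simp

lemma toC_iter (F : Plane ≃ₜ Plane) (n : ℕ) (x : Plane) :
    (toC F)^[n] (eC.symm x) = eC.symm (F^[n] x) := by
  induction n with
  | zero => rfl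
  | succ n ih =>
    rw [Function.iterate_succ_apply', ih, Function.iterate_succ_apply', toC_apply,
      Homeomorph.apply_symm_apply]

lemma prj_iter {f : Ann ≃ₜ Ann} {F : Plane ≃ₜ Plane} (hlift : IsLift f F) (n : ℕ) (x : Plane) :
    prj (F^[n] x) = f^[n] (prj x) := by
  induction n with
  | zero => rfl
  | succ n ih => rw [Function.iterate_succ_apply', hlift, ih, Function.iterate_succ_apply']

lemma iter_fst (F : Plane ≃ₜ Plane) (n : ℕ) (x : Plane) :
    (F^[n] x).1 - x.1 = ((toC F)^[n] (eC.symm x)).re - (eC.symm x).re := by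
  rw [toC_iter, eC_symm_apply, eC_symm_apply]

lemma hasRot_of {f : Ann ≃ₜ Ann} {F : Plane ≃ₜ Plane}
    (hT : ∀ p (k : ℤ), toC F (p + k) = toC F p + k) (zt : Plane) (ρ : ℝ)
    (hrec : PosRec f (prj zt))
    (H : ∀ φ : ℕ → ℕ, StrictMono φ → Tendsto (fun k => f^[φ k] (prj zt)) atTop (𝓝 (prj zt)) →
      Tendsto (fun k => ((F^[φ k] zt).1 - zt.1) / (φ k : ℝ)) atTop (𝓝 ρ)) :
    HasRotNum f F (prj zt) ρ := by
  refine ⟨hrec, fun yt hy φ hφ hφ2 => ?_⟩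
  refine (H φ hφ hφ2).congr fun k => ?_
  obtain ⟨d, hd⟩ := prj_eq_iff hy
  have e : eC.symm yt = eC.symm zt + d := by
    rw [hd, eC_symm_apply, eC_symm_apply]
    apply Complex.ext <;> simp
  rw [iter_fst F (φ k) yt, iter_fst F (φ k) zt, e, iter_add_int hT]
  simp

lemma rot_periodic {f : Ann ≃ₜ Ann} {F : Plane ≃ₜ Plane} (hlift : IsLift f F)
    (hT : ∀ p (k : ℤ), toC F (p + k) = toC F p + k) (q : ℕ) (hq : 1 ≤ q) (p : ℤ) (w : ℂ)
    (hw : (toC F)^[q] w = w + p) : HasRotNum f F (prj (eC w)) (p / q) := by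
  have hq' : (0 : ℝ) < q := by exact_mod_cast hq
  have hfix : f^[q] (prj (eC w)) = prj (eC w) := by
    rw [← prj_iter hlift]
    have h1 := toC_iter F q (eC w)
    rw [Homeomorph.symm_apply_apply, hw] at h1
    have h2 : F^[q] (eC w) = ((eC w).1 + p, (eC w).2) := by
      apply eC.symm.injective
      rw [← h1, eC_symm_apply, eC_apply]
      apply Complex.ext <;> simp
    rw [h2, prj_add_int]
  apply hasRot_of hT
  · refine ⟨fun k => q * (k + 1), fun a b hab => Nat.mul_lt_mul_of_pos_left (by omega) (by omega), ?_⟩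
    have : ∀ k, f^[q * (k + 1)] (prj (eC w)) = prj (eC w) := by
      intro k
      rw [Function.iterate_mul]
      exact Function.iterate_fixed hfix _
    simp only [this]
    exact tendsto_const_nhds
  · intro φ hφ _
    let v : ℕ → ℝ := fun n => ((toC F)^[n] w).re - w.re - n * (p / q)
    have hv : Function.Periodic v q := by
      intro n
      simp only [v]
      rw [Function.iterate_add_apply, hw, iter_add_int hT]
      push_cast
      simp only [Complex.add_re, Complex.intCast_re]
      field_simp
      ring
    have hb : ∀ n, |v n| ≤ ∑ i ∈ Finset.range q, |v i| := by
      intro n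
      rw [← hv.map_mod_nat n]
      exact Finset.single_le_sum (f := fun i => |v i|) (fun i _ => abs_nonneg _)
        (Finset.mem_range.mpr (Nat.mod_lt _ (by omega)))
    have hv0 : Tendsto (fun n : ℕ => v n / n) atTop (𝓝 0) := by
      refine squeeze_zero_norm (a := fun n : ℕ => (∑ i ∈ Finset.range q, |v i|) / n) (fun n => ?_)
        (tendsto_const_div_atTop_nhds_zero_nat _)
      rw [norm_div, Real.norm_natCast, Real.norm_eq_abs]
      exact div_le_div_of_nonneg_right (hb n) (Nat.cast_nonneg _)
    have h1 : Tendsto (fun n : ℕ => v n / n + p / q) atTop (𝓝 (0 + p / q)) := hv0.add_const _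
    rw [zero_add] at h1
    refine (h1.comp hφ.tendsto_atTop).congr' ?_
    filter_upwards [eventually_gt_atTop 0] with k hk
    have hφk : (0 : ℝ) < φ k := by
      have := hφ.id_le k
      simp only [id] at this
      exact_mod_cast lt_of_lt_of_le hk this
    rw [iter_fst, Homeomorph.symm_apply_apply]
    simp only [Function.comp_apply, v]
    field_simp
    ring

lemma rot_nonempty {f : Ann ≃ₜ Ann} {F : Plane ≃ₜ Plane}
    (hiso : IsotopicToId f) (hlift : IsLift f F)
    (hrec : ∃ z : Ann, PosRec f z) : (Rot f F).Nonempty := by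
  obtain ⟨hN, hT⟩ := lift_nice f F hiso hlift
  by_cases hf : ∀ q : ℕ, 1 ≤ q → ∀ (p : ℤ) x, (toC F)^[q] x ≠ x + p
  swap
  · push Not at hf
    obtain ⟨q, hq, p, w, hw⟩ := hf
    exact ⟨_, _, rot_periodic hlift hT q hq p w hw⟩
  obtain ⟨z, hz⟩ := hrec
  obtain ⟨zt, rfl⟩ : ∃ zt, prj zt = z := by
    obtain ⟨x, hx⟩ := QuotientAddGroup.mk_surjective z.1
    exact ⟨(x, z.2), Prod.ext hx rfl⟩
  have ret : ∀ φ : ℕ → ℕ, StrictMono φ →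
      Tendsto (fun k => f^[φ k] (prj zt)) atTop (𝓝 (prj zt)) → ∀ ε > 0,
      ∀ᶠ k in atTop, ∃ d : ℤ, Ret (toC F) (eC.symm zt) ε (φ k) d := by
    intro φ hφ h1 ε hε
    simp only [← prj_iter hlift] at h1
    filter_upwards [exists_int_close h1 ε hε, eventually_gt_atTop 0] with k ⟨d, hd⟩ hk
    refine ⟨d, lt_of_lt_of_le hk (hφ.id_le k), ?_⟩
    rw [toC_iter]; exact hd
  have hr : ∀ ε > 0, ∃ n d, Ret (toC F) (eC.symm zt) ε n d := by
    intro ε hε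
    obtain ⟨φ, hφ, h1⟩ := hz
    obtain ⟨k, d, h2⟩ := (ret φ hφ h1 ε hε).exists
    exact ⟨_, d, h2⟩
  obtain ⟨ρ, hρ⟩ := exists_rho hN hT hf hr
  refine ⟨ρ, _, hasRot_of hT zt ρ hz fun φ hφ h1 => ?_⟩
  rw [Metric.tendsto_nhds]
  intro η hη
  obtain ⟨ε, hε, H⟩ := hρ (η / 2) (half_pos hη)
  have h2 : Tendsto (fun k => (1 : ℝ) / (φ k : ℝ)) atTop (𝓝 0) :=
    (tendsto_const_div_atTop_nhds_zero_nat 1).comp hφ.tendsto_atTop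
  filter_upwards [ret φ hφ h1 (min ε 1) (lt_min hε one_pos),
    h2.eventually_lt_const (half_pos hη)] with k ⟨d, hd⟩ hk
  have h3 := H _ _ (hd.mono (min_le_left _ _))
  have hn : (0 : ℝ) < φ k := by exact_mod_cast hd.1
  have h4 : |(F^[φ k] zt).1 - zt.1 - d| < 1 := by
    have h5 := (Complex.abs_re_le_norm _).trans_lt
      ((dist_eq_norm _ _).symm.trans_lt (hd.2.trans_le (min_le_right _ _)))
    rw [iter_fst]
    simp only [Complex.sub_re, Complex.add_re, Complex.intCast_re] at h5
    rwa [sub_sub]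
  rw [Real.dist_eq]
  have h6 : ((F^[φ k] zt).1 - zt.1) / (φ k : ℝ) - ρ
      = ((F^[φ k] zt).1 - zt.1 - d) / (φ k : ℝ) + ((d : ℝ) / φ k - ρ) := by ring
  rw [h6]
  refine (abs_add_le _ _).trans_lt ?_
  have h7 : |((F^[φ k] zt).1 - zt.1 - d) / (φ k : ℝ)| ≤ 1 / (φ k : ℝ) := by
    rw [abs_div, abs_of_pos hn]
    exact div_le_div_of_nonneg_right h4.le hn.le
  linarith

/-- Corollary 4.3: if `f` has a positively recurrent point then `Rot(F) ≠ ∅`. -/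
theorem recurrent_implies_rotation_number
    (f : Ann ≃ₜ Ann) (F : Plane ≃ₜ Plane)
    (hiso : IsotopicToId f) (hint : IntersectionProperty f) (hlift : IsLift f F)
    (hrec : ∃ z : Ann, PosRec ⇑f z) :
    (Rot ⇑f ⇑F).Nonempty := by
  exact rot_nonempty hiso hlift hrec
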